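/- Let u : ℝ × ℝ → ℝ be smooth and satisfy u_t = u²·(1 + u_xx) at every point. Then the function Q(t,x) := (1/2)·u²·[2u²·u_xxxx + 2u·(3 + 7u_xx + 4u_xx² + 6u_x·u_xxx + 2x·u_xxx) + (1 + u_xx)·(14u_x² + 12x·u_x + 3x²)] satisfies Q_t = u²·Q_xx + 2u·(1 + u_xx)·Q at every point; that is, Q is a fourth-order generalized symmetry characteristic of u_t = u²(1 + u_xx). -/

import Mathlib

/-- Partial derivative with respect to the first (time) variable. -/
noncomputable def dt (u : ℝ → ℝ → ℝ) (t x : ℝ) : ℝ := deriv (fun s => u s x) t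

/-- `n`-th partial derivative with respect to the second (space) variable. -/
noncomputable def dx (u : ℝ → ℝ → ℝ) (n : ℕ) (t x : ℝ) : ℝ := iteratedDeriv n (u t) x

/-!
Everything in sight is a differential polynomial in `u` with coefficients polynomial in `x`. On such
polynomials `∂/∂x` acts as the total derivative `Dₓ`, and, along solutions of `u_t = F`, `∂/∂t` acts
as the evolutionary derivation sending `uₙ` to `Dₓⁿ F`: this is the equality of mixed partials.
The Fréchet derivative `D_F q` is in turn the evolutionary derivation of `q` applied to `F`, so the
linearized equation for `q` is a polynomial identity in the jet variables `x, u, u₁, …, u₆`.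
-/

section PartialDerivatives

open Function
open scoped ContDiff

variable {u : ℝ → ℝ → ℝ} {t x : ℝ}

lemma dx_zero (u : ℝ → ℝ → ℝ) : dx u 0 = u := by
  ext t x
  simp only [dx, iteratedDeriv_zero]

lemma dx_one (u : ℝ → ℝ → ℝ) (t x : ℝ) : dx u 1 t x = deriv (u t) x := by
  simp only [dx, iteratedDeriv_one]

lemma dx_succ (u : ℝ → ℝ → ℝ) (n : ℕ) : dx u (n + 1) = dx (dx u n) 1 := by
  ext t x
  rw [dx_one, dx, iteratedDeriv_succ]
  rfl

lemma hasDerivAt_time_of_differentiableAt (hu : DifferentiableAt ℝ (uncurry u) (t, x)) :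
    HasDerivAt (fun s => u s x) (fderiv ℝ (uncurry u) (t, x) (1, 0)) t :=
  hu.hasFDerivAt.comp_hasDerivAt (f := fun s => (s, x)) t
    ((hasDerivAt_id t).prodMk (hasDerivAt_const t x))

lemma hasDerivAt_space_of_differentiableAt (hu : DifferentiableAt ℝ (uncurry u) (t, x)) :
    HasDerivAt (u t) (fderiv ℝ (uncurry u) (t, x) (0, 1)) x :=
  hu.hasFDerivAt.comp_hasDerivAt (f := fun y => (t, y)) x
    ((hasDerivAt_const x t).prodMk (hasDerivAt_id x))

lemma uncurry_dt (hu : Differentiable ℝ (uncurry u)) :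
    uncurry (dt u) = fun p => fderiv ℝ (uncurry u) p (1, 0) := by
  ext ⟨t, x⟩
  exact (hasDerivAt_time_of_differentiableAt (hu (t, x))).deriv

lemma uncurry_dx_one (hu : Differentiable ℝ (uncurry u)) :
    uncurry (dx u 1) = fun p => fderiv ℝ (uncurry u) p (0, 1) := by
  ext ⟨t, x⟩
  rw [uncurry_apply_pair, dx_one]
  exact (hasDerivAt_space_of_differentiableAt (hu (t, x))).deriv

lemma contDiff_dx (hu : ContDiff ℝ ∞ (uncurry u)) (n : ℕ) : ContDiff ℝ ∞ (uncurry (dx u n)) := by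
  induction n with
  | zero => rwa [dx_zero]
  | succ n ih =>
    rw [dx_succ, uncurry_dx_one (ih.differentiable (by simp))]
    exact (ih.fderiv_right (by simp)).clm_apply contDiff_const

lemma dt_dx_one (hu : ContDiff ℝ 2 (uncurry u)) : dt (dx u 1) = dx (dt u) 1 := by
  have hu' : Differentiable ℝ (uncurry u) := hu.differentiable (by simp)
  have hdu : Differentiable ℝ (fderiv ℝ (uncurry u)) :=
    (hu.fderiv_right (m := 1) (by norm_num)).differentiable (by simp)
  have hdt : Differentiable ℝ (uncurry (dt u)) :=
    uncurry_dt hu' ▸ hdu.clm_apply (differentiable_const _)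
  have hdx : Differentiable ℝ (uncurry (dx u 1)) :=
    uncurry_dx_one hu' ▸ hdu.clm_apply (differentiable_const _)
  have second_deriv (v w p : ℝ × ℝ) :
      fderiv ℝ (fun q => fderiv ℝ (uncurry u) q v) p w
        = fderiv ℝ (fderiv ℝ (uncurry u)) p w v := by
    simp [((hdu p).hasFDerivAt.clm_apply (hasFDerivAt_const v p)).fderiv]
  ext t x
  calc dt (dx u 1) t x
      = fderiv ℝ (fderiv ℝ (uncurry u)) (t, x) (1, 0) (0, 1) := by
        rw [← second_deriv, ← uncurry_dx_one hu']
        exact congrFun (uncurry_dt hdx) (t, x)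
    _ = fderiv ℝ (fderiv ℝ (uncurry u)) (t, x) (0, 1) (1, 0) :=
        hu.contDiffAt.isSymmSndFDerivAt (by simp) _ _
    _ = dx (dt u) 1 t x := by
        rw [← second_deriv, ← uncurry_dt hu']
        exact (congrFun (uncurry_dx_one hdt) (t, x)).symm

lemma dt_dx (hu : ContDiff ℝ ∞ (uncurry u)) (n : ℕ) : dt (dx u n) = dx (dt u) n := by
  induction n with
  | zero => rw [dx_zero, dx_zero]
  | succ n ih =>
    rw [dx_succ, dt_dx_one ((contDiff_dx hu n).of_le (WithTop.coe_le_coe.2 le_top)), ih, ← dx_succ]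

lemma hasDerivAt_dx_time (hu : ContDiff ℝ ∞ (uncurry u)) (n : ℕ) (t x : ℝ) :
    HasDerivAt (fun s => dx u n s x) (dx (dt u) n t x) t := by
  rw [← dt_dx hu]
  exact (hasDerivAt_time_of_differentiableAt
    ((contDiff_dx hu n).differentiable (by simp) (t, x))).differentiableAt.hasDerivAt

lemma hasDerivAt_dx_space (hu : ContDiff ℝ ∞ (uncurry u)) (n : ℕ) (t x : ℝ) :
    HasDerivAt (dx u n t) (dx u (n + 1) t x) x := by
  rw [dx_succ, dx_one]
  exact (hasDerivAt_space_of_differentiableAt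
    ((contDiff_dx hu n).differentiable (by simp) (t, x))).differentiableAt.hasDerivAt

end PartialDerivatives

section Derivation

open MvPolynomial

lemma hasDerivAt_aeval_of_derivation {𝕜 σ : Type*} [NontriviallyNormedField 𝕜]
    (D : Derivation 𝕜 (MvPolynomial σ 𝕜) (MvPolynomial σ 𝕜)) {v : 𝕜 → σ → 𝕜} {s : 𝕜}
    (hv : ∀ i, HasDerivAt (fun r => v r i) (aeval (v s) (D (X i))) s) (P : MvPolynomial σ 𝕜) :
    HasDerivAt (fun r => aeval (v r) P) (aeval (v s) (D P)) s := by
  induction P using MvPolynomial.induction_on with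
  | C a => simpa only [aeval_C, derivation_C, map_zero] using hasDerivAt_const s _
  | add P R hP hR => simpa only [map_add] using hP.fun_add hR
  | mul_X P i hP =>
    simp only [map_mul, aeval_X, Derivation.leibniz, smul_eq_mul, map_add]
    exact (hP.fun_mul (hv i)).congr_deriv (by ring)

lemma derivation_ofNat {R A M : Type*} [CommSemiring R] [CommSemiring A] [Algebra R A]
    [AddCommMonoid M] [Module R M] [Module A M] (D : Derivation R A M) (n : ℕ) [n.AtLeastTwo] :
    D ofNat(n) = 0 :=
  D.map_natCast n

end Derivation

/-- Differential polynomials in one function `u` of a space variable `x`, with coefficients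
polynomial in `x`: the generator `none` stands for `x` and `some n` for the `n`-th space derivative
of `u`. -/
abbrev DiffPoly := MvPolynomial (Option ℕ) ℝ

namespace DiffPoly

open Function MvPolynomial
open scoped ContDiff

/-- The independent variable `x` as a differential polynomial. -/
noncomputable def space : DiffPoly := X none

/-- The jet coordinate `uₙ`, standing for the `n`-th space derivative of `u`. -/
noncomputable def jet (n : ℕ) : DiffPoly := X (some n)

/-- The total space derivative `∂ₓ + ∑ uₙ₊₁ ∂/∂uₙ`. -/
noncomputable def totalDeriv : Derivation ℝ DiffPoly DiffPoly :=
  mkDerivation ℝ fun i => i.elim 1 fun n => jet (n + 1)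

/-- The evolutionary vector field `∑ (Dₓⁿ F) ∂/∂uₙ` with characteristic `F`. Applied to `P`, it is
the time derivative of `P` along `u_t = F`, and also the Fréchet derivative of `P` in the
direction `F`. -/
noncomputable def evolDeriv (F : DiffPoly) : Derivation ℝ DiffPoly DiffPoly :=
  mkDerivation ℝ fun i => i.elim 0 fun n => totalDeriv^[n] F

/-- The value of a differential polynomial on the function `u` at `(t, x)`. -/
noncomputable def eval (u : ℝ → ℝ → ℝ) (t x : ℝ) : DiffPoly →ₐ[ℝ] ℝ :=
  aeval fun i => i.elim x fun n => dx u n t x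

/-- `q` is the characteristic of a generalized symmetry of `u_t = F`: the linearized equation
`q_t = D_F q` holds formally, i.e. the evolutionary vector fields of `F` and `q` commute. -/
def IsSymmetry (F q : DiffPoly) : Prop := evolDeriv F q = evolDeriv q F

@[simp] lemma totalDeriv_space : totalDeriv space = 1 := mkDerivation_X ..

@[simp] lemma totalDeriv_jet (n : ℕ) : totalDeriv (jet n) = jet (n + 1) := mkDerivation_X ..

@[simp] lemma evolDeriv_space (F : DiffPoly) : evolDeriv F space = 0 := mkDerivation_X ..

@[simp] lemma evolDeriv_jet (F : DiffPoly) (n : ℕ) : evolDeriv F (jet n) = totalDeriv^[n] F :=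
  mkDerivation_X ..

@[simp] lemma eval_space (u : ℝ → ℝ → ℝ) (t x : ℝ) : eval u t x space = x := aeval_X ..

@[simp] lemma eval_jet (u : ℝ → ℝ → ℝ) (t x : ℝ) (n : ℕ) : eval u t x (jet n) = dx u n t x :=
  aeval_X ..

section Eval

variable {u : ℝ → ℝ → ℝ} {F q : DiffPoly}

lemma hasDerivAt_eval_space (hu : ContDiff ℝ ∞ (uncurry u)) (P : DiffPoly) (t x : ℝ) :
    HasDerivAt (fun y => eval u t y P) (eval u t x (totalDeriv P)) x := by
  refine hasDerivAt_aeval_of_derivation totalDeriv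
    (v := fun y i => i.elim y fun n => dx u n t y) ?_ P
  rintro (_ | n)
  · exact (hasDerivAt_id x).congr_deriv (by simp [totalDeriv])
  · exact (hasDerivAt_dx_space hu n t x).congr_deriv (by simp [totalDeriv, jet])

lemma dx_eval (hu : ContDiff ℝ ∞ (uncurry u)) (P : DiffPoly) (n : ℕ) (t x : ℝ) :
    dx (fun t x => eval u t x P) n t x = eval u t x (totalDeriv^[n] P) := by
  induction n generalizing x with
  | zero => rw [dx_zero, iterate_zero_apply]
  | succ n ih =>
    rw [dx_succ, dx_one, funext ih, iterate_succ_apply']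
    exact (hasDerivAt_eval_space hu _ t x).deriv

lemma hasDerivAt_eval_time (hu : ContDiff ℝ ∞ (uncurry u))
    (heq : ∀ t x, dt u t x = eval u t x F) (P : DiffPoly) (t x : ℝ) :
    HasDerivAt (fun s => eval u s x P) (eval u t x (evolDeriv F P)) t := by
  refine hasDerivAt_aeval_of_derivation (evolDeriv F)
    (v := fun s i => i.elim x fun n => dx u n s x) ?_ P
  rintro (_ | n)
  · exact (hasDerivAt_const t x).congr_deriv (by simp [evolDeriv])
  · have hdt : dt u = fun t x => eval u t x F := funext₂ heq
    refine (hasDerivAt_dx_time hu n t x).congr_deriv ?_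
    rw [hdt, dx_eval hu, evolDeriv, mkDerivation_X]
    rfl

lemma IsSymmetry.dt_eval (hq : IsSymmetry F q) (hu : ContDiff ℝ ∞ (uncurry u))
    (heq : ∀ t x, dt u t x = eval u t x F) (t x : ℝ) :
    dt (fun t x => eval u t x q) t x = eval u t x (evolDeriv q F) := by
  rw [← hq]
  exact (hasDerivAt_eval_time hu heq q t x).deriv

end Eval

lemma totalDeriv_iterate_smul (c : ℝ) (P : DiffPoly) (n : ℕ) :
    totalDeriv^[n] (c • P) = c • totalDeriv^[n] P :=
  (Commute.iterate_left (g := (c • ·)) (totalDeriv.map_smul c) n) P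

lemma evolDeriv_smul (c : ℝ) (F : DiffPoly) : evolDeriv (c • F) = c • evolDeriv F := by
  refine derivation_ext ?_
  rintro (_ | n)
  · simp [evolDeriv]
  · simp [evolDeriv, totalDeriv_iterate_smul]

lemma IsSymmetry.smul {F q : DiffPoly} (c : ℝ) (hq : IsSymmetry F q) : IsSymmetry F (c • q) := by
  rw [IsSymmetry, Derivation.map_smul, hq, evolDeriv_smul, Derivation.smul_apply]

/-- The right-hand side of `u_t = u² (1 + u_xx)`. -/
noncomputable def flow : DiffPoly := jet 0 ^ 2 * (1 + jet 2)

/-- The fourth-order characteristic `C₁`. -/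
noncomputable def fourthOrderChar : DiffPoly :=
  (1 / 2 : ℝ) • (jet 0 ^ 2 *
    (2 * jet 0 ^ 2 * jet 4
      + 2 * jet 0 * (3 + 7 * jet 2 + 4 * jet 2 ^ 2 + 6 * jet 1 * jet 3 + 2 * space * jet 3)
      + (1 + jet 2) * (14 * jet 1 ^ 2 + 12 * space * jet 1 + 3 * space ^ 2)))

lemma evolDeriv_flow (q : DiffPoly) :
    evolDeriv q flow = jet 0 ^ 2 * totalDeriv^[2] q + 2 * jet 0 * (1 + jet 2) * q := by
  simp only [flow, pow_two, Derivation.leibniz, map_add, Derivation.map_one_eq_zero, evolDeriv_jet,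
    iterate_zero_apply, smul_eq_mul]
  ring

lemma eval_flow (u : ℝ → ℝ → ℝ) (t x : ℝ) :
    eval u t x flow = u t x ^ 2 * (1 + dx u 2 t x) := by
  simp only [flow, map_mul, map_pow, map_add, map_one, eval_jet, dx_zero]

lemma eval_fourthOrderChar (u : ℝ → ℝ → ℝ) (t x : ℝ) :
    eval u t x fourthOrderChar = (1 / 2) * u t x ^ 2 *
      (2 * u t x ^ 2 * dx u 4 t x
        + 2 * u t x * (3 + 7 * dx u 2 t x + 4 * dx u 2 t x ^ 2
            + 6 * dx u 1 t x * dx u 3 t x + 2 * x * dx u 3 t x)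
        + (1 + dx u 2 t x) * (14 * dx u 1 t x ^ 2 + 12 * x * dx u 1 t x + 3 * x ^ 2)) := by
  simp only [fourthOrderChar, map_smul, map_mul, map_pow, map_add, map_one, map_ofNat, eval_jet,
    eval_space, dx_zero, smul_eq_mul, mul_assoc]

lemma eval_evolDeriv_flow {u : ℝ → ℝ → ℝ} (hu : ContDiff ℝ ∞ (uncurry u)) (q : DiffPoly)
    (t x : ℝ) :
    eval u t x (evolDeriv q flow) = u t x ^ 2 * dx (fun t x => eval u t x q) 2 t x
      + 2 * u t x * (1 + dx u 2 t x) * eval u t x q := by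
  simp only [evolDeriv_flow, dx_eval hu, map_mul, map_pow, map_add, map_one, map_ofNat, eval_jet,
    dx_zero]

lemma totalDeriv_flow :
    totalDeriv flow = 2 * jet 0 * jet 1 * (1 + jet 2) + jet 0 ^ 2 * jet 3 := by
  simp only [flow, pow_two, Derivation.leibniz, map_add, Derivation.map_one_eq_zero,
    totalDeriv_jet, smul_eq_mul]
  ring

lemma totalDeriv_iterate_two_flow :
    totalDeriv^[2] flow = 2 * (jet 1 ^ 2 + jet 0 * jet 2) * (1 + jet 2)
      + 4 * jet 0 * jet 1 * jet 3 + jet 0 ^ 2 * jet 4 := by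
  rw [iterate_succ_apply', iterate_one, totalDeriv_flow]
  simp only [pow_two, Derivation.leibniz, map_add, Derivation.map_one_eq_zero, derivation_ofNat,
    totalDeriv_jet, smul_eq_mul]
  ring

lemma totalDeriv_iterate_three_flow :
    totalDeriv^[3] flow = 6 * jet 1 * jet 2 * (1 + jet 2)
      + (6 * jet 1 ^ 2 + 2 * jet 0 + 8 * jet 0 * jet 2) * jet 3
      + 6 * jet 0 * jet 1 * jet 4 + jet 0 ^ 2 * jet 5 := by
  rw [iterate_succ_apply', totalDeriv_iterate_two_flow]
  simp only [pow_two, Derivation.leibniz, map_add, Derivation.map_one_eq_zero, derivation_ofNat,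
    totalDeriv_jet, smul_eq_mul]
  ring

lemma totalDeriv_iterate_four_flow :
    totalDeriv^[4] flow = 6 * jet 2 ^ 2 * (1 + jet 2) + 8 * jet 1 * jet 3 * (1 + 4 * jet 2)
      + 8 * jet 0 * jet 3 ^ 2 + (12 * jet 1 ^ 2 + 2 * jet 0 + 14 * jet 0 * jet 2) * jet 4
      + 8 * jet 0 * jet 1 * jet 5 + jet 0 ^ 2 * jet 6 := by
  rw [iterate_succ_apply', totalDeriv_iterate_three_flow]
  simp only [pow_two, Derivation.leibniz, map_add, Derivation.map_one_eq_zero, derivation_ofNat,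
    totalDeriv_jet, smul_eq_mul]
  ring

lemma isSymmetry_flow_fourthOrderChar : IsSymmetry flow fourthOrderChar := by
  refine IsSymmetry.smul _ ?_
  rw [IsSymmetry, evolDeriv_flow]
  -- Using the closed forms of `Dₓⁿ flow` before unfolding `flow` keeps the final identity small.
  simp only [pow_two, Derivation.leibniz, map_add, Derivation.map_one_eq_zero, derivation_ofNat,
    evolDeriv_jet, evolDeriv_space, iterate_zero_apply, iterate_one, totalDeriv_flow,
    totalDeriv_iterate_two_flow, totalDeriv_iterate_three_flow, totalDeriv_iterate_four_flow,
    smul_eq_mul]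
  simp only [flow, iterate_succ_apply', iterate_zero_apply, Derivation.leibniz, map_add, map_zero,
    Derivation.map_one_eq_zero, derivation_ofNat, totalDeriv_jet, totalDeriv_space, smul_eq_mul,
    Nat.reduceAdd]
  ring

end DiffPoly

theorem stmt_15 (u : ℝ → ℝ → ℝ) (hu : ContDiff ℝ (⊤ : ℕ∞) fun p : ℝ × ℝ => u p.1 p.2)
    (heq : ∀ t x, dt u t x = (u t x) ^ 2 * (1 + dx u 2 t x))
    (Q : ℝ → ℝ → ℝ)
    (hQ : ∀ t x, Q t x = (1 / 2) * (u t x) ^ 2 *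
      (2 * (u t x) ^ 2 * dx u 4 t x
        + 2 * u t x * (3 + 7 * dx u 2 t x + 4 * (dx u 2 t x) ^ 2
            + 6 * dx u 1 t x * dx u 3 t x + 2 * x * dx u 3 t x)
        + (1 + dx u 2 t x) * (14 * (dx u 1 t x) ^ 2 + 12 * x * dx u 1 t x + 3 * x ^ 2))) :
    ∀ t x, dt Q t x = (u t x) ^ 2 * dx Q 2 t x + 2 * u t x * (1 + dx u 2 t x) * Q t x := by
  have hF (t x : ℝ) : dt u t x = DiffPoly.eval u t x DiffPoly.flow := by
    rw [heq, DiffPoly.eval_flow]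
  have hQ_eval : Q = fun t x => DiffPoly.eval u t x DiffPoly.fourthOrderChar :=
    funext₂ fun t x => by rw [hQ, DiffPoly.eval_fourthOrderChar]
  intro t x
  rw [hQ_eval, DiffPoly.isSymmetry_flow_fourthOrderChar.dt_eval hu hF,
    DiffPoly.eval_evolDeriv_flow hu]
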